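/- arXiv:2106.02717 — 3 statements merged into one kernel-verified Lean document; each statement's English description precedes it below -/
import Mathlib

section
/- Let β ∈ {0,1}. For all r > 0, |m_β''(r)| ∼ r ⟨√β r⟩ ⟨r⟩^{-5/2}; that is, there are absolute constants c₁, c₂ > 0 with c₁ r ⟨√β r⟩ ⟨r⟩^{-5/2} ≤ |m_β''(r)| ≤ c₂ r ⟨√β r⟩ ⟨r⟩^{-5/2} for all r > 0. -/
noncomputable section

open Real

/-- Japanese bracket `⟨x⟩ = (1+|x|²)^{1/2}`. -/
def jap (x : ℝ) : ℝ := Real.sqrt (1 + x ^ 2)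

/-- The symbol `m_β(r) = √(r(1+βr²)tanh r)`. -/
def mSymb (β r : ℝ) : ℝ := Real.sqrt (r * (1 + β * r ^ 2) * Real.tanh r)

open Filter Topology

lemma iteratedDeriv_two_sqrt {f f' : ℝ → ℝ} {f'' r : ℝ} (hr : 0 < r)
    (hpos : ∀ x, 0 < x → 0 < f x) (hf : ∀ x, 0 < x → HasDerivAt f (f' x) x)
    (hf' : HasDerivAt f' f'' r) :
    iteratedDeriv 2 (fun x => √(f x)) r =
      (2 * f r * f'' - f' r ^ 2) / (4 * (f r * √(f r))) := by
  rw [iteratedDeriv_succ, iteratedDeriv_one]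
  have hderiv : deriv (fun x => √(f x)) =ᶠ[𝓝 r] fun x => f' x / (2 * √(f x)) := by
    filter_upwards [Ioi_mem_nhds hr] with x hx
    exact ((hf x hx).sqrt (hpos x hx).ne').deriv
  rw [hderiv.deriv_eq]
  have hs : 0 < √(f r) := Real.sqrt_pos.2 (hpos r hr)
  have h := hf'.div (((hf r hr).sqrt (hpos r hr).ne').const_mul 2) (by positivity)
  refine Eq.trans h.deriv ?_
  obtain ⟨w, hw⟩ : ∃ w, w = √(f r) := ⟨_, rfl⟩
  have hsq : f r = w ^ 2 := by rw [hw, Real.sq_sqrt (hpos r hr).le]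
  rw [← hw] at hs ⊢
  rw [hsq]
  field_simp
  ring

lemma hasDerivAt_tanh_one_sub_sq (x : ℝ) :
    HasDerivAt Real.tanh (1 - Real.tanh x ^ 2) x := by
  have hc := (Real.cosh_pos x).ne'
  have h := (Real.hasDerivAt_sinh x).div (Real.hasDerivAt_cosh x) hc
  have he : Real.tanh = Real.sinh / Real.cosh := by
    funext y; simp [Real.tanh_eq_sinh_div_cosh]
  rw [he]
  refine h.congr_deriv ?_
  rw [Pi.div_apply]
  field_simp

lemma iteratedDeriv_two_mSymb {β r : ℝ} (hβ : 0 ≤ β) (hr : 0 < r) :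
    iteratedDeriv 2 (mSymb β) r =
      (4 * β * r ^ 2 * Real.tanh r ^ 2 + 4 * β * r ^ 2 * (1 + β * r ^ 2) * Real.tanh r ^ 2
        + 4 * β * r ^ 3 * (1 + β * r ^ 2) * Real.tanh r * (1 - Real.tanh r ^ 2)
        - (1 + β * r ^ 2) ^ 2 * ((Real.tanh r - r * (1 - Real.tanh r ^ 2)) ^ 2
          + 4 * r ^ 2 * Real.tanh r ^ 2 * (1 - Real.tanh r ^ 2))) /
      (4 * (r * (1 + β * r ^ 2) * Real.tanh r * √(r * (1 + β * r ^ 2) * Real.tanh r))) := by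
  have hg (x : ℝ) : HasDerivAt (fun x : ℝ => x * (1 + β * x ^ 2)) (1 + 3 * β * x ^ 2) x := by
    refine ((hasDerivAt_id x).mul (((hasDerivAt_pow 2 x).const_mul β).const_add 1)).congr_deriv ?_
    simp; ring
  have hg' (x : ℝ) : HasDerivAt (fun x : ℝ => 1 + 3 * β * x ^ 2) (6 * β * x) x := by
    refine (((hasDerivAt_pow 2 x).const_mul (3 * β)).const_add 1).congr_deriv ?_
    simp; ring
  have ht := hasDerivAt_tanh_one_sub_sq
  have hs (x : ℝ) : HasDerivAt (fun x => 1 - Real.tanh x ^ 2)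
      (-(2 * Real.tanh x * (1 - Real.tanh x ^ 2))) x := by
    refine (((ht x).pow 2).const_sub 1).congr_deriv ?_
    simp
  have hpos (x : ℝ) (hx : 0 < x) : 0 < x * (1 + β * x ^ 2) * Real.tanh x := by
    have : 0 < Real.tanh x := by
      rw [Real.tanh_eq_sinh_div_cosh]
      exact div_pos (Real.sinh_pos_iff.2 hx) (Real.cosh_pos x)
    positivity
  have key := iteratedDeriv_two_sqrt hr hpos (fun x _ => (hg x).mul (ht x))
    (((hg' r).mul (ht r)).add ((hg r).mul (hs r)))
  refine Eq.trans key ?_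
  congr 1
  ring

lemma div_four_mul_sqrt_bounds {f b N B c C : ℝ} (hb : 0 < b) (hB : 0 ≤ B) (hc : 0 ≤ c)
    (hf₁ : b ^ 2 ≤ f) (hf₂ : f ≤ 4 * b ^ 2) (hN₁ : c * B ≤ N) (hN₂ : N ≤ C * B) :
    c / 32 * (B / b ^ 3) ≤ N / (4 * (f * √f)) ∧ N / (4 * (f * √f)) ≤ C / 4 * (B / b ^ 3) := by
  have h₁ : b ≤ √f := Real.le_sqrt_of_sq_le hf₁
  have h₂ : √f ≤ 2 * b := Real.sqrt_le_iff.2 ⟨by positivity, by linarith⟩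
  have hf : 0 < f := lt_of_lt_of_le (by positivity) hf₁
  have hcB : 0 ≤ c * B := by positivity
  constructor
  · calc c / 32 * (B / b ^ 3) = c * B / (4 * (4 * b ^ 2 * (2 * b))) := by field_simp; ring
      _ ≤ N / (4 * (f * √f)) := by
          have : 0 ≤ N := hcB.trans hN₁
          gcongr
  · calc N / (4 * (f * √f)) ≤ C * B / (4 * (b ^ 2 * b)) := by
          have : 0 ≤ C * B := by linarith
          gcongr
      _ = C / 4 * (B / b ^ 3) := by field_simp

lemma tanh_bounds {r : ℝ} (hr : 0 < r) :
    0 < Real.tanh r ∧ Real.tanh r < 1 ∧ Real.tanh r ≤ r ∧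
      r ^ 2 ≤ (1 + r ^ 2) * Real.tanh r ^ 2 ∧
      (1 + r ^ 2 / 2) ^ 2 * (1 - Real.tanh r ^ 2) ≤ 1 ∧
      r * (1 - Real.tanh r ^ 2) * (1 + r ^ 2 / 2) ≤ Real.tanh r ∧
      (r ≤ 1 → 1 / 9 ≤ 1 - Real.tanh r ^ 2) := by
  have hC := Real.cosh_pos r
  have hS : r ≤ Real.sinh r := Real.self_le_sinh_iff.2 hr.le
  have hC2 := Real.cosh_sq r
  have hCq : 1 + r ^ 2 / 2 ≤ Real.cosh r := by
    have h := Real.cosh_two_mul (r / 2)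
    have h2 := Real.cosh_sq (r / 2)
    have h3 : r / 2 ≤ Real.sinh (r / 2) := Real.self_le_sinh_iff.2 (by positivity)
    rw [mul_div_cancel₀ r two_ne_zero] at h
    nlinarith
  have hs : 1 - Real.tanh r ^ 2 = 1 / Real.cosh r ^ 2 := by
    rw [Real.tanh_eq_sinh_div_cosh]; field_simp; linarith
  have ht0 : 0 < Real.tanh r := by
    rw [Real.tanh_eq_sinh_div_cosh]
    exact div_pos (by linarith) hC
  refine ⟨ht0, Real.tanh_lt_one r, ?_, ?_, ?_, ?_, ?_⟩
  · have h := Convex.norm_image_sub_le_of_norm_hasDerivWithin_le (C := 1) (x := 0) (y := r)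
      (fun x _ => (hasDerivAt_tanh_one_sub_sq x).hasDerivWithinAt) (fun x _ => by
        rw [Real.norm_eq_abs, abs_le]
        constructor <;> nlinarith [Real.tanh_sq_lt_one x, sq_nonneg (Real.tanh x)])
      convex_univ (Set.mem_univ _) (Set.mem_univ _)
    simpa [abs_of_pos ht0, abs_of_pos hr] using h
  · rw [Real.tanh_eq_sinh_div_cosh, div_pow, mul_div_assoc', le_div_iff₀ (by positivity), hC2]
    nlinarith
  · rw [hs, mul_one_div, div_le_one (by positivity)]
    gcongr
  · rw [hs, Real.tanh_eq_sinh_div_cosh, mul_one_div, div_mul_eq_mul_div,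
      div_le_div_iff₀ (by positivity) hC]
    have : r * (1 + r ^ 2 / 2) ≤ Real.sinh r * Real.cosh r := by gcongr
    nlinarith
  · intro h1
    rw [hs]
    have : Real.cosh r ≤ 3 := by
      have h1 : Real.exp r ≤ Real.exp 1 := Real.exp_le_exp.2 h1
      have h2 : Real.exp (-r) ≤ Real.exp 1 := Real.exp_le_exp.2 (by linarith)
      rw [Real.cosh_eq]
      linarith [Real.exp_one_lt_d9]
    apply one_div_le_one_div_of_le (by positivity)
    nlinarith

/-- With `t = tanh r` and `s = 1 - t²`, the middle term is `f'² - 2 f f''` for `f = r tanh r`. -/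
lemma curvature_zero_bounds {r t s : ℝ} (hr : 0 < r) (ht0 : 0 < t) (ht1 : t < 1) (htr : t ≤ r)
    (hs : s = 1 - t ^ 2) (htlow : r ^ 2 ≤ (1 + r ^ 2) * t ^ 2)
    (hs2 : (1 + r ^ 2 / 2) ^ 2 * s ≤ 1) (hrs : r * s * (1 + r ^ 2 / 2) ≤ t)
    (hs1 : r ≤ 1 → 1 / 9 ≤ s) :
    1 / 100 * (r ^ 4 / (1 + r ^ 2) ^ 2) ≤ (t - r * s) ^ 2 + 4 * r ^ 2 * t ^ 2 * s ∧
      (t - r * s) ^ 2 + 4 * r ^ 2 * t ^ 2 * s ≤ 20 * (r ^ 4 / (1 + r ^ 2) ^ 2) := by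
  have hs0 : 0 < s := by nlinarith
  have hp : 0 < 1 + r ^ 2 := by positivity
  have hrst : r * s ≤ t := le_trans (le_mul_of_one_le_right (by positivity) (by nlinarith)) hrs
  rw [← mul_div_assoc, ← mul_div_assoc, div_le_iff₀ (by positivity), le_div_iff₀ (by positivity)]
  constructor
  · rcases le_total r 1 with h | h
    · have h9 := hs1 h
      have h1 : r ^ 4 ≤ r ^ 2 * ((1 + r ^ 2) * t ^ 2) := by nlinarith [sq_nonneg r]
      calc 1 / 100 * r ^ 4 ≤ 4 * r ^ 2 * t ^ 2 * (1 / 9) * (1 + r ^ 2) * 1 := by nlinarith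
        _ ≤ 4 * r ^ 2 * t ^ 2 * s * (1 + r ^ 2) * (1 + r ^ 2) := by
          gcongr
          nlinarith
        _ ≤ _ := by nlinarith [mul_nonneg (sq_nonneg (t - r * s)) (sq_nonneg (1 + r ^ 2))]
    · have h1 : r * s ≤ 2 / 3 * t := by
        have : r * s * (3 / 2) ≤ r * s * (1 + r ^ 2 / 2) := by gcongr; nlinarith
        linarith
      have h2 : (1 / 3 * t) ^ 2 ≤ (t - r * s) ^ 2 := by gcongr; linarith
      have h3 : 1 / 2 ≤ t ^ 2 := by nlinarith
      have h4 : r ^ 4 ≤ (1 + r ^ 2) ^ 2 := by nlinarith [sq_nonneg r]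
      have h5 : 1 / 100 ≤ (t - r * s) ^ 2 + 4 * r ^ 2 * t ^ 2 * s := by
        have : 0 ≤ 4 * r ^ 2 * t ^ 2 * s := by positivity
        nlinarith
      gcongr
  · have h1 : (t - r * s) * (1 + r ^ 2) ≤ 2 * r ^ 2 := by
      rcases le_total r 1 with h | h
      · have h2 : t - r * s ≤ r * t ^ 2 := by rw [hs]; nlinarith
        have h3 : r * t ^ 2 ≤ 1 * r ^ 2 := by gcongr
        nlinarith
      · have : 0 < r * s := by positivity
        have h2 : t - r * s ≤ 1 := by linarith
        nlinarith
    have h2 : ((t - r * s) * (1 + r ^ 2)) ^ 2 ≤ (2 * r ^ 2) ^ 2 := by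
      have : 0 ≤ t - r * s := by linarith
      gcongr
    have h3 : (1 + r ^ 2) ^ 2 * s ≤ 4 := by nlinarith [sq_nonneg r]
    have h4 : 4 * r ^ 2 * t ^ 2 * ((1 + r ^ 2) ^ 2 * s) ≤ 4 * r ^ 2 * r ^ 2 * 4 := by gcongr
    nlinarith

/-- With `t = tanh r` and `s = 1 - t²`, the middle term is `2 f f'' - f'²` for
`f = r (1 + r²) tanh r`. -/
lemma curvature_one_bounds {r t s : ℝ} (hr : 0 < r) (ht0 : 0 < t) (ht1 : t < 1) (htr : t ≤ r)
    (hs : s = 1 - t ^ 2) (htlow : r ^ 2 ≤ (1 + r ^ 2) * t ^ 2)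
    (hs2 : (1 + r ^ 2 / 2) ^ 2 * s ≤ 1) (hrs : r * s * (1 + r ^ 2 / 2) ≤ t)
    (hs1 : r ≤ 1 → 1 / 9 ≤ s) :
    1 / 100 * r ^ 4 ≤ 4 * r ^ 2 * t ^ 2 + 4 * r ^ 2 * (1 + r ^ 2) * t ^ 2
        + 4 * r ^ 3 * (1 + r ^ 2) * t * s
        - (1 + r ^ 2) ^ 2 * ((t - r * s) ^ 2 + 4 * r ^ 2 * t ^ 2 * s) ∧
      4 * r ^ 2 * t ^ 2 + 4 * r ^ 2 * (1 + r ^ 2) * t ^ 2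
        + 4 * r ^ 3 * (1 + r ^ 2) * t * s
        - (1 + r ^ 2) ^ 2 * ((t - r * s) ^ 2 + 4 * r ^ 2 * t ^ 2 * s) ≤ 20 * r ^ 4 := by
  have hs0 : 0 < s := by nlinarith
  have hp : 0 < 1 + r ^ 2 := by positivity
  have hrst : r * s ≤ t := le_trans (le_mul_of_one_le_right (by positivity) (by nlinarith)) hrs
  have hps : (1 + r ^ 2) * s ≤ 1 := by nlinarith [mul_nonneg hs0.le (sq_nonneg (r ^ 2))]
  have ht2 : t ^ 2 ≤ r ^ 2 := by gcongr
  constructor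
  · rcases le_total r 1 with h | h
    · have h9 := hs1 h
      have h1 : (1 + r ^ 2) * (t - r * s) ≤ 2 * (r * t) := by
        have h2 : t - r * s ≤ r * t * t := by rw [hs]; nlinarith
        have h3 : r * t * t ≤ r * t * 1 := by gcongr
        calc (1 + r ^ 2) * (t - r * s) ≤ 2 * (r * t * 1) := by
              have : 0 ≤ t - r * s := by linarith
              gcongr <;> nlinarith
          _ = _ := by ring
      have h2 : ((1 + r ^ 2) * (t - r * s)) ^ 2 ≤ (2 * (r * t)) ^ 2 := by
        have : 0 ≤ t - r * s := by linarith
        gcongr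
      have h3 : 4 * r ^ 2 * (1 + r ^ 2) * t ^ 2 * ((1 + r ^ 2) * s)
          ≤ 4 * r ^ 2 * (1 + r ^ 2) * t ^ 2 * 1 := by gcongr
      have h4 : r ≤ 2 * t := by nlinarith
      have h5 : 4 * r ^ 3 * 1 * (r / 2) * (1 / 9) ≤ 4 * r ^ 3 * (1 + r ^ 2) * t * s := by
        gcongr <;> nlinarith
      nlinarith [sq_nonneg (r ^ 2)]
    · have h1 : (t - r * s) ^ 2 ≤ t ^ 2 - r * s * t := by
        nlinarith [mul_nonneg (mul_nonneg hr.le hs0.le) (sub_nonneg.2 hrst)]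
      have h2 : (1 + r ^ 2) ^ 2 * (t - r * s) ^ 2 ≤ (1 + r ^ 2) ^ 2 * (t ^ 2 - r * s * t) := by
        gcongr
      have h3 : (1 + r ^ 2) * (5 * r ^ 2 + 1) * (r * s) * t ^ 2
          ≤ (1 + r ^ 2) * (5 * r ^ 2 + 1) * (r * s) * t := by gcongr; nlinarith
      have h4 : 1 / 2 ≤ t ^ 2 := by nlinarith
      have h5 : 1 / 50 * r ^ 4 ≤ 4 * r ^ 2 + (1 + r ^ 2) * (3 * r ^ 2 - 1)
          - (1 + r ^ 2) * s * (4 * r ^ 4 - 5 * r ^ 3 + 4 * r ^ 2 - r) := by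
        rcases le_total r 3 with h' | h'
        · have h6 : (1 + r ^ 2) * s * (4 * r ^ 4 - 5 * r ^ 3 + 4 * r ^ 2 - r)
              ≤ 1 * (4 * r ^ 4 - 5 * r ^ 3 + 4 * r ^ 2 - r) := by
            gcongr
            have : 0 ≤ r * (r - 1) * (4 * r ^ 2 - r + 3) + 2 * r := by
              have : 0 ≤ r - 1 := by linarith
              have : 0 ≤ 4 * r ^ 2 - r + 3 := by nlinarith
              positivity
            nlinarith
          nlinarith [pow_pos hr 3, mul_nonneg (pow_pos hr 3).le (sub_nonneg.2 h')]
        · have h6 : s * r ^ 4 ≤ 4 := by nlinarith [sq_nonneg r]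
          have h7 : (1 + r ^ 2) * s * (4 * r ^ 4 - 5 * r ^ 3 + 4 * r ^ 2 - r)
              ≤ (1 + r ^ 2) * s * (4 * r ^ 4) := by
            gcongr
            nlinarith [sq_nonneg r]
          have h8 := mul_le_mul_of_nonneg_left h6 hp.le
          have h9 : 9 ≤ r ^ 2 := by nlinarith
          have h10 := mul_le_mul_of_nonneg_left h9 (sq_nonneg r)
          linarith
      have h6 := mul_le_mul_of_nonneg_right h5 (sq_nonneg t)
      have h7 := mul_le_mul_of_nonneg_left h4 (show 0 ≤ 1 / 50 * r ^ 4 by positivity)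
      linarith
  · have h1 : 4 * r ^ 3 * t * ((1 + r ^ 2) * s) ≤ 4 * r ^ 3 * r * 1 := by gcongr
    have h2 : 4 * r ^ 2 * t ^ 2 ≤ 4 * r ^ 2 * r ^ 2 := by gcongr
    have h3 : 4 * r ^ 2 * r ^ 2 * t ^ 2 ≤ 4 * r ^ 2 * r ^ 2 * 1 := by gcongr; nlinarith
    have h4 : 0 ≤ (1 + r ^ 2) ^ 2 * ((t - r * s) ^ 2 + 4 * r ^ 2 * t ^ 2 * s) := by positivity
    linarith

/-- `|m_β''(r)| ∼ r ⟨√β r⟩ ⟨r⟩^{-5/2}` for all `r > 0`, `β ∈ {0,1}`. -/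
theorem deriv2_mSymb_comparable (β : ℝ) (hβ : β = 0 ∨ β = 1) :
    ∃ c₁ > (0 : ℝ), ∃ c₂ > (0 : ℝ), ∀ r : ℝ, 0 < r →
      c₁ * (r * jap (Real.sqrt β * r) * jap r ^ (-(5 : ℝ) / 2)) ≤
        |iteratedDeriv 2 (mSymb β) r| ∧
      |iteratedDeriv 2 (mSymb β) r| ≤
        c₂ * (r * jap (Real.sqrt β * r) * jap r ^ (-(5 : ℝ) / 2)) := by
  have hw (r : ℝ) : ∃ w > 0, w ^ 2 = jap r ∧ w ^ 4 = 1 + r ^ 2 ∧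
      jap r ^ (-(5 : ℝ) / 2) = (w ^ 5)⁻¹ := by
    have hj : 0 < jap r := Real.sqrt_pos.2 (by positivity)
    have hsq : √(jap r) ^ 2 = jap r := Real.sq_sqrt hj.le
    refine ⟨√(jap r), Real.sqrt_pos.2 hj, hsq, ?_, ?_⟩
    · rw [show √(jap r) ^ 4 = (√(jap r) ^ 2) ^ 2 by ring, hsq, jap, Real.sq_sqrt (by positivity)]
    · rw [neg_div, Real.rpow_neg hj.le, Real.sqrt_eq_rpow, ← Real.rpow_mul_natCast hj.le]
      norm_num
  have hf (r w : ℝ) (hr : 0 < r) (hw0 : 0 < w) (hw4 : w ^ 4 = 1 + r ^ 2) :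
      r ≤ w ^ 2 * Real.tanh r ∧ w ^ 2 * Real.tanh r ≤ 4 * r := by
    obtain ⟨ht0, ht1, htr, htlow, -⟩ := tanh_bounds hr
    constructor
    · refine (pow_le_pow_iff_left₀ hr.le (by positivity) two_ne_zero).1 ?_
      nlinarith
    · have h : w ^ 2 ≤ 1 + r := (pow_le_pow_iff_left₀ (by positivity) (by positivity) two_ne_zero).1 (by nlinarith)
      nlinarith
  refine ⟨1 / 100 / 32, by norm_num, 20 / 4, by norm_num, fun r hr => ?_⟩
  obtain ⟨w, hw0, hw2, hw4, hw5⟩ := hw r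
  obtain ⟨hf₁, hf₂⟩ := hf r w hr hw0 hw4
  obtain ⟨ht0, ht1, htr, htlow, hs2, hrs, hs1⟩ := tanh_bounds hr
  rcases hβ with rfl | rfl
  · obtain ⟨hN₁, hN₂⟩ := curvature_zero_bounds hr ht0 ht1 htr rfl htlow hs2 hrs hs1
    have key := div_four_mul_sqrt_bounds (f := r * Real.tanh r) (b := r / w) (by positivity)
      (by positivity) (by norm_num)
      (by rw [div_pow, div_le_iff₀ (by positivity)]; nlinarith)
      (by rw [div_pow, ← mul_div_assoc, le_div_iff₀ (by positivity)]; nlinarith) hN₁ hN₂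
    rw [iteratedDeriv_two_mSymb le_rfl hr, hw5]
    have hB : r ^ 4 / (1 + r ^ 2) ^ 2 / (r / w) ^ 3 = r * jap (√0 * r) * (w ^ 5)⁻¹ := by
      rw [← hw4]
      simp only [jap, Real.sqrt_zero, zero_mul]
      norm_num
      field_simp
    rw [hB] at key
    convert key using 2 <;>
    · simp only [mul_zero, zero_mul, add_zero, mul_one, one_pow, one_mul, zero_sub, neg_div, abs_neg]
      refine abs_of_nonneg (le_trans ?_ key.1)
      have : 0 ≤ jap (√0 * r) := Real.sqrt_nonneg _
      positivity
  · obtain ⟨hN₁, hN₂⟩ := curvature_one_bounds hr ht0 ht1 htr rfl htlow hs2 hrs hs1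
    have key := div_four_mul_sqrt_bounds (f := r * (1 + r ^ 2) * Real.tanh r) (b := r * w)
      (by positivity) (by positivity) (by norm_num)
      (by rw [← hw4]; nlinarith [mul_le_mul_of_nonneg_left hf₁ (show 0 ≤ r * w ^ 2 by positivity)])
      (by rw [← hw4]; nlinarith [mul_le_mul_of_nonneg_left hf₂ (show 0 ≤ r * w ^ 2 by positivity)])
      hN₁ hN₂
    rw [iteratedDeriv_two_mSymb zero_le_one hr, hw5]
    have hB : r ^ 4 / (r * w) ^ 3 = r * jap (√1 * r) * (w ^ 5)⁻¹ := by
      rw [Real.sqrt_one, one_mul, ← hw2]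
      field_simp
    rw [hB] at key
    convert key using 2 <;>
    · simp only [mul_one, one_mul]
      refine abs_of_nonneg (le_trans ?_ key.1)
      have : 0 ≤ jap (√1 * r) := Real.sqrt_nonneg _
      positivity
end
end

section
/- Let β ∈ {0,1} and k ≥ 3 be an integer. Then there is a constant C_k depending only on k such that |m_β^{(k)}(r)| ≤ C_k r^{1−k} ⟨√β r⟩ ⟨r⟩^{-1/2} for all r > 0, where m_β^{(k)} denotes the k-th derivative of m_β. -/
noncomputable section

open Real

/-- The ratio `βr²/(1+βr²)`. -/
def betaRatio (β r : ℝ) : ℝ := β * r ^ 2 / (1 + β * r ^ 2)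

/-- The function `2r / sinh 2r`. -/
def divSinh (r : ℝ) : ℝ := 2 * r / Real.sinh (2 * r)

/-- The function `2r coth 2r`. -/
def mulCoth (r : ℝ) : ℝ := 2 * r * Real.cosh (2 * r) / Real.sinh (2 * r)

/-- An algebra of functions, bounded on `(0, ∞)` and stable under the Euler operator `r d/dr`,
which contains the logarithmic Euler derivative of `mSymb β`. -/
inductive EulerAlgebra (β : ℝ) : (ℝ → ℝ) → Prop
  | const (c : ℝ) : EulerAlgebra β fun _ => c
  | betaRatio : EulerAlgebra β (betaRatio β)
  | divSinh_mul_pow (n : ℕ) : EulerAlgebra β fun r => divSinh r * mulCoth r ^ n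
  | add {f g : ℝ → ℝ} :
      EulerAlgebra β f → EulerAlgebra β g → EulerAlgebra β fun r => f r + g r
  | mul {f g : ℝ → ℝ} :
      EulerAlgebra β f → EulerAlgebra β g → EulerAlgebra β fun r => f r * g r

theorem hasDerivAt_betaRatio {β r : ℝ} (hβ : 0 ≤ β) (hr : 0 < r) :
    HasDerivAt (betaRatio β) (2 * betaRatio β r * (1 - betaRatio β r) / r) r := by
  have hne : 1 + β * r ^ 2 ≠ 0 := by positivity
  have hnum : HasDerivAt (fun r : ℝ => β * r ^ 2) (β * (2 * r)) r := by
    simpa using (hasDerivAt_pow 2 r).const_mul β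
  have h := hnum.div (hnum.const_add 1) hne
  refine h.congr_deriv ?_
  unfold betaRatio
  field_simp

theorem hasDerivAt_sinh_two_mul (r : ℝ) :
    HasDerivAt (fun r : ℝ => Real.sinh (2 * r)) (Real.cosh (2 * r) * 2) r := by
  simpa using ((hasDerivAt_id r).const_mul 2).sinh

theorem hasDerivAt_divSinh {r : ℝ} (hr : 0 < r) :
    HasDerivAt divSinh (divSinh r * (1 - mulCoth r) / r) r := by
  have hs : 0 < Real.sinh (2 * r) := Real.sinh_pos_iff.2 (by positivity)
  have h := ((hasDerivAt_id r).const_mul 2).div (hasDerivAt_sinh_two_mul r) hs.ne'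
  refine h.congr_deriv ?_
  unfold divSinh mulCoth
  simp only [id]
  field_simp

theorem hasDerivAt_mulCoth {r : ℝ} (hr : 0 < r) :
    HasDerivAt mulCoth ((mulCoth r - divSinh r ^ 2) / r) r := by
  have hs : 0 < Real.sinh (2 * r) := Real.sinh_pos_iff.2 (by positivity)
  have hc : HasDerivAt (fun r : ℝ => Real.cosh (2 * r)) (Real.sinh (2 * r) * 2) r := by
    simpa using ((hasDerivAt_id r).const_mul 2).cosh
  have h := (((hasDerivAt_id r).const_mul 2).mul hc).div (hasDerivAt_sinh_two_mul r) hs.ne'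
  refine h.congr_deriv ?_
  unfold divSinh mulCoth
  simp only [id, Pi.mul_apply]
  field_simp
  linear_combination (-2 * r) * Real.cosh_sq (2 * r)

theorem EulerAlgebra.exists_hasDerivAt {β : ℝ} (hβ : 0 ≤ β) {f : ℝ → ℝ} (hf : EulerAlgebra β f) :
    ∃ g, EulerAlgebra β g ∧ ∀ r, 0 < r → HasDerivAt f (g r / r) r := by
  induction hf with
  | const c => exact ⟨_, .const 0, fun r _ => by simpa using hasDerivAt_const r c⟩
  | betaRatio =>
    refine ⟨_, .mul (.mul (.const 2) .betaRatio) (.add (.const 1) (.mul (.const (-1)) .betaRatio)),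
      fun r hr => (hasDerivAt_betaRatio hβ hr).congr_deriv ?_⟩
    ring
  | divSinh_mul_pow n =>
    refine ⟨_, .add (.add (.mul (.const (1 + n)) (.divSinh_mul_pow n))
        (.mul (.const (-1)) (.divSinh_mul_pow (n + 1))))
      (.mul (.const (-n)) (.mul (.divSinh_mul_pow 0)
        (.mul (.divSinh_mul_pow 0) (.divSinh_mul_pow (n - 1))))),
      fun r hr => ((hasDerivAt_divSinh hr).mul ((hasDerivAt_mulCoth hr).pow n)).congr_deriv ?_⟩
    rcases n with _ | n
    · simp
      ring
    · simp
      ring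
  | add _ _ ihf ihg =>
    obtain ⟨f', hf', hdf⟩ := ihf
    obtain ⟨g', hg', hdg⟩ := ihg
    refine ⟨_, .add hf' hg', fun r hr => ((hdf r hr).add (hdg r hr)).congr_deriv ?_⟩
    ring
  | @mul f g hf hg ihf ihg =>
    obtain ⟨f', hf', hdf⟩ := ihf
    obtain ⟨g', hg', hdg⟩ := ihg
    refine ⟨_, .add (.mul hf' hg) (.mul hf hg'),
      fun r hr => ((hdf r hr).mul (hdg r hr)).congr_deriv ?_⟩
    ring

theorem divSinh_nonneg {r : ℝ} (hr : 0 < r) : 0 ≤ divSinh r :=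
  div_nonneg (by positivity) (Real.sinh_pos_iff.2 (by positivity)).le

theorem mulCoth_nonneg {r : ℝ} (hr : 0 < r) : 0 ≤ mulCoth r :=
  div_nonneg (mul_nonneg (by positivity) (Real.cosh_pos _).le)
    (Real.sinh_pos_iff.2 (by positivity)).le

theorem mulCoth_le {r : ℝ} (hr : 0 < r) : mulCoth r ≤ 1 + 2 * r := by
  have hx : 0 < 2 * r := by positivity
  rw [mulCoth, div_le_iff₀ (Real.sinh_pos_iff.2 hx)]
  have hsinh : 2 * r ≤ Real.sinh (2 * r) := Real.self_le_sinh_iff.2 hx.le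
  have hexp : Real.exp (-(2 * r)) ≤ 1 := Real.exp_le_one_iff.2 (by linarith)
  rw [← Real.cosh_sub_sinh] at hexp
  nlinarith

theorem divSinh_le {r : ℝ} (hr : 0 < r) :
    divSinh r ≤ 2 * (1 + 2 * r) * Real.exp (-(2 * r)) := by
  have hx : 0 < 2 * r := by positivity
  rw [divSinh, div_le_iff₀ (Real.sinh_pos_iff.2 hx), Real.sinh_eq]
  have hmul : Real.exp (-(2 * r)) * Real.exp (2 * r) = 1 := by
    rw [← Real.exp_add]; simp
  have hsq : Real.exp (-(2 * r)) ^ 2 * (1 + 4 * r) ≤ 1 := by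
    have h : 1 + 4 * r ≤ Real.exp (2 * r) ^ 2 := by
      rw [← Real.exp_nat_mul]
      have := Real.add_one_le_exp ((2 : ℕ) * (2 * r))
      push_cast at this ⊢
      linarith
    calc _ ≤ Real.exp (-(2 * r)) ^ 2 * Real.exp (2 * r) ^ 2 := by gcongr
      _ = 1 := by rw [← mul_pow, hmul, one_pow]
  have hpos := Real.exp_pos (-(2 * r))
  have hsq' : Real.exp (-(2 * r)) ^ 2 ≤ 1 := by nlinarith [sq_nonneg (Real.exp (-(2 * r)))]
  nlinarith

theorem divSinh_mul_pow_le (n : ℕ) {r : ℝ} (hr : 0 < r) :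
    divSinh r * mulCoth r ^ n ≤ 2 * ((n + 1).factorial * Real.exp 1) := by
  have hfac : (1 + 2 * r) ^ (n + 1) ≤ (n + 1).factorial * Real.exp (1 + 2 * r) := by
    have h := Real.pow_div_factorial_le_exp (1 + 2 * r) (by positivity) (n + 1)
    rwa [div_le_iff₀' (by positivity)] at h
  calc divSinh r * mulCoth r ^ n
      ≤ (2 * (1 + 2 * r) * Real.exp (-(2 * r))) * (1 + 2 * r) ^ n := by
        have := mulCoth_nonneg hr
        gcongr
        · exact divSinh_le hr
        · exact mulCoth_le hr
    _ = 2 * ((1 + 2 * r) ^ (n + 1) * Real.exp (-(2 * r))) := by ring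
    _ ≤ 2 * ((n + 1).factorial * Real.exp (1 + 2 * r) * Real.exp (-(2 * r))) := by gcongr
    _ = 2 * ((n + 1).factorial * Real.exp 1) := by
        rw [mul_assoc ((n + 1).factorial : ℝ), ← Real.exp_add]
        ring_nf

theorem EulerAlgebra.exists_abs_le {β : ℝ} (hβ : 0 ≤ β) {f : ℝ → ℝ} (hf : EulerAlgebra β f) :
    ∃ C, ∀ r, 0 < r → |f r| ≤ C := by
  induction hf with
  | const c => exact ⟨|c|, fun _ _ => le_rfl⟩
  | betaRatio =>
    refine ⟨1, fun r _ => ?_⟩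
    rw [_root_.betaRatio, abs_of_nonneg (by positivity), div_le_one (by positivity)]
    linarith
  | divSinh_mul_pow n =>
    refine ⟨2 * ((n + 1).factorial * Real.exp 1), fun r hr => ?_⟩
    rw [abs_of_nonneg (mul_nonneg (divSinh_nonneg hr) (pow_nonneg (mulCoth_nonneg hr) n))]
    exact divSinh_mul_pow_le n hr
  | add _ _ ihf ihg =>
    obtain ⟨A, hA⟩ := ihf
    obtain ⟨B, hB⟩ := ihg
    exact ⟨A + B, fun r hr => (abs_add_le _ _).trans (add_le_add (hA r hr) (hB r hr))⟩
  | mul _ _ ihf ihg =>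
    obtain ⟨A, hA⟩ := ihf
    obtain ⟨B, hB⟩ := ihg
    refine ⟨A * B, fun r hr => ?_⟩
    rw [abs_mul]
    exact mul_le_mul (hA r hr) (hB r hr) (abs_nonneg _) ((abs_nonneg _).trans (hA r hr))

theorem hasDerivAt_mSymb {β r : ℝ} (hβ : 0 ≤ β) (hr : 0 < r) :
    HasDerivAt (mSymb β) ((1 / 2 + betaRatio β r + 1 / 2 * divSinh r) * mSymb β r / r) r := by
  have hs : 0 < Real.sinh r := Real.sinh_pos_iff.2 hr
  have hc : 0 < Real.cosh r := Real.cosh_pos r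
  have hβr : 0 < 1 + β * r ^ 2 := by positivity
  have htanh : HasDerivAt Real.tanh (1 / Real.cosh r ^ 2) r := by
    have h := (Real.hasDerivAt_sinh r).div (Real.hasDerivAt_cosh r) hc.ne'
    refine (h.congr_of_eventuallyEq (.of_forall Real.tanh_eq_sinh_div_cosh)).congr_deriv ?_
    rw [← Real.cosh_sq_sub_sinh_sq r]
    ring
  have hpoly : HasDerivAt (fun r : ℝ => r * (1 + β * r ^ 2)) (1 + 3 * (β * r ^ 2)) r := by
    refine ((hasDerivAt_id r).mul (((hasDerivAt_pow 2 r).const_mul β).const_add 1)).congr_deriv ?_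
    simp
    ring
  have hpos : 0 < r * (1 + β * r ^ 2) * Real.tanh r := by
    rw [Real.tanh_eq_sinh_div_cosh]
    positivity
  refine ((hpoly.mul htanh).sqrt hpos.ne').congr_deriv ?_
  have hsq : mSymb β r ^ 2 = r * (1 + β * r ^ 2) * (Real.sinh r / Real.cosh r) := by
    rw [mSymb, Real.sq_sqrt hpos.le, Real.tanh_eq_sinh_div_cosh]
  have hm : 0 < mSymb β r := Real.sqrt_pos.2 hpos
  change _ / (2 * mSymb β r) = _
  rw [div_eq_div_iff (by positivity) hr.ne']
  have hrw : (1 / 2 + betaRatio β r + 1 / 2 * divSinh r) * mSymb β r * (2 * mSymb β r) =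
      (1 + 2 * betaRatio β r + divSinh r) * mSymb β r ^ 2 := by ring
  rw [hrw, hsq, betaRatio, divSinh, Real.sinh_two_mul, Real.tanh_eq_sinh_div_cosh]
  field_simp
  ring

theorem exists_iteratedDeriv_mSymb_eq {β : ℝ} (hβ : 0 ≤ β) (k : ℕ) :
    ∃ Q, EulerAlgebra β Q ∧
      ∀ r, 0 < r → iteratedDeriv k (mSymb β) r = Q r * mSymb β r / r ^ k := by
  induction k with
  | zero => exact ⟨_, .const 1, fun r _ => by simp⟩
  | succ k ih =>
    obtain ⟨Q, hQ, hk⟩ := ih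
    obtain ⟨Q', hQ', hd⟩ := hQ.exists_hasDerivAt hβ
    refine ⟨_, .add hQ' (.mul hQ (.add (.const (1 / 2 - k))
      (.add .betaRatio (.mul (.const (1 / 2)) (.divSinh_mul_pow 0))))), fun r hr => ?_⟩
    rw [iteratedDeriv_succ]
    have hev : iteratedDeriv k (mSymb β) =ᶠ[nhds r] fun r => Q r * mSymb β r / r ^ k :=
      Filter.eventually_of_mem (Ioi_mem_nhds hr) hk
    rw [hev.deriv_eq]
    have h := ((hd r hr).mul (hasDerivAt_mSymb hβ hr)).div (hasDerivAt_pow k r)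
      (pow_pos hr k).ne'
    refine h.deriv.trans ?_
    rcases k with _ | k
    · simp
      field_simp
      ring
    · simp
      field_simp
      ring

theorem tanh_mul_jap_le {r : ℝ} (hr : 0 < r) : Real.tanh r * jap r ≤ 4 * r := by
  have hc : 0 < Real.cosh r := Real.cosh_pos r
  have hle : Real.tanh r ≤ 2 * r := by
    rw [Real.tanh_eq_sinh_div_cosh, div_le_iff₀ hc]
    have hexp := Real.add_one_le_exp (-(2 * r))
    have hsplit : Real.exp (-(2 * r)) = Real.exp (-r) * Real.exp (-r) := by
      rw [← Real.exp_add]; ring_nf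
    have hmul : Real.exp (-r) * Real.exp r = 1 := by
      rw [← Real.exp_add]; simp
    have := Real.exp_pos r
    have := Real.exp_pos (-r)
    rw [Real.sinh_eq, Real.cosh_eq]
    nlinarith
  have hone : Real.tanh r ≤ 1 := (Real.tanh_lt_one r).le
  have hnonneg : 0 ≤ Real.tanh r := by
    rw [Real.tanh_eq_sinh_div_cosh]
    exact div_nonneg (Real.sinh_pos_iff.2 hr).le hc.le
  have hjap : jap r ≤ 1 + r := Real.sqrt_le_iff.2 ⟨by positivity, by nlinarith⟩
  calc Real.tanh r * jap r ≤ Real.tanh r * (1 + r) := by gcongr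
    _ ≤ 4 * r := by nlinarith

theorem mSymb_le {β r : ℝ} (hβ : 0 ≤ β) (hr : 0 < r) :
    mSymb β r ≤ 2 * (r * jap (Real.sqrt β * r) * jap r ^ (-(1 : ℝ) / 2)) := by
  have hjap : 0 < jap r := Real.sqrt_pos.2 (by positivity)
  have hpow : (jap r ^ (-(1 : ℝ) / 2)) ^ 2 = (jap r)⁻¹ := by
    rw [← Real.rpow_natCast, ← Real.rpow_mul hjap.le, ← Real.rpow_neg_one]
    norm_num
  have hjapβ : jap (Real.sqrt β * r) ^ 2 = 1 + β * r ^ 2 := by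
    rw [jap, Real.sq_sqrt (by positivity), mul_pow, Real.sq_sqrt hβ]
  have hjapβ_nonneg : 0 ≤ jap (Real.sqrt β * r) := Real.sqrt_nonneg _
  refine Real.sqrt_le_iff.2 ⟨by positivity, ?_⟩
  have htanh : Real.tanh r ≤ 4 * r * (jap r)⁻¹ := by
    rw [← div_eq_mul_inv, le_div_iff₀ hjap]
    exact tanh_mul_jap_le hr
  rw [mul_pow, mul_pow, mul_pow, hpow, hjapβ]
  calc r * (1 + β * r ^ 2) * Real.tanh r ≤ r * (1 + β * r ^ 2) * (4 * r * (jap r)⁻¹) := by gcongr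
    _ = _ := by ring

theorem exists_iteratedDeriv_mSymb_bound {β : ℝ} (hβ : 0 ≤ β) (k : ℕ) :
    ∃ C > (0 : ℝ), ∀ r : ℝ, 0 < r →
      |iteratedDeriv k (mSymb β) r| ≤
        C * (r ^ ((1 : ℝ) - k) * jap (Real.sqrt β * r) * jap r ^ (-(1 : ℝ) / 2)) := by
  obtain ⟨Q, hQ, hk⟩ := exists_iteratedDeriv_mSymb_eq hβ k
  obtain ⟨C, hC⟩ := hQ.exists_abs_le hβ
  have hC0 : 0 ≤ C := (abs_nonneg _).trans (hC 1 one_pos)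
  refine ⟨2 * C + 1, by positivity, fun r hr => ?_⟩
  have hm : 0 ≤ mSymb β r := Real.sqrt_nonneg _
  have hjapβ : 0 ≤ jap (Real.sqrt β * r) := Real.sqrt_nonneg _
  have hjap : 0 ≤ jap r := Real.sqrt_nonneg _
  rw [hk r hr, abs_div, abs_mul, abs_of_nonneg hm, abs_of_pos (pow_pos hr k),
    Real.rpow_sub hr, Real.rpow_one, Real.rpow_natCast]
  calc |Q r| * mSymb β r / r ^ k
      ≤ C * (2 * (r * jap (Real.sqrt β * r) * jap r ^ (-(1 : ℝ) / 2))) / r ^ k := by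
        gcongr
        · exact hC r hr
        · exact mSymb_le hβ hr
    _ = 2 * C * (r / r ^ k * jap (Real.sqrt β * r) * jap r ^ (-(1 : ℝ) / 2)) := by ring
    _ ≤ _ := by
        gcongr
        linarith

/-- For `β ∈ {0,1}` and `k ≥ 3`, `|m_β^{(k)}(r)| ≤ C_k r^{1-k} ⟨√β r⟩ ⟨r⟩^{-1/2}`
for all `r > 0`, with `C_k` depending only on `k`. -/
theorem iteratedDeriv_mSymb_bound (k : ℕ) (hk : 3 ≤ k) :
    ∃ C > (0 : ℝ), ∀ β : ℝ, β = 0 ∨ β = 1 → ∀ r : ℝ, 0 < r →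
      |iteratedDeriv k (mSymb β) r| ≤
        C * (r ^ ((1 : ℝ) - k) * jap (Real.sqrt β * r) * jap r ^ (-(1 : ℝ) / 2)) := by
  obtain ⟨C₀, hC₀, h₀⟩ := exists_iteratedDeriv_mSymb_bound le_rfl k
  obtain ⟨C₁, hC₁, h₁⟩ := exists_iteratedDeriv_mSymb_bound zero_le_one k
  have hweight (β r : ℝ) (hr : 0 < r) :
      0 ≤ r ^ ((1 : ℝ) - k) * jap (Real.sqrt β * r) * jap r ^ (-(1 : ℝ) / 2) :=
    mul_nonneg (mul_nonneg (Real.rpow_nonneg hr.le _) (Real.sqrt_nonneg _))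
      (Real.rpow_nonneg (Real.sqrt_nonneg _) _)
  refine ⟨C₀ + C₁, by positivity, ?_⟩
  rintro β (rfl | rfl) r hr
  · exact (h₀ r hr).trans (mul_le_mul_of_nonneg_right (by linarith) (hweight _ r hr))
  · exact (h₁ r hr).trans (mul_le_mul_of_nonneg_right (by linarith) (hweight _ r hr))
end
end

section
/- Let T₀(r) = √(tanh r) for r > 0. Then T₀(r) ∼ r^{1/2} ⟨r⟩^{-1/2} for all r > 0, and for every integer j ≥ 1 there is a constant C_j such that |T₀^{(j)}(r)| ≤ C_j r^{1/2 − j} ⟨r⟩^{j − 1/2} e^{-2r} for all r > 0. -/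
noncomputable section

open Real

theorem tanh_pos_of_pos {r : ℝ} (hr : 0 < r) : 0 < tanh r := by
  rw [tanh_eq_sinh_div_cosh]
  exact div_pos (sinh_pos_iff.2 hr) (cosh_pos r)

theorem hasDerivAt_tanh_one_sub_sq_s13 (r : ℝ) : HasDerivAt tanh (1 - tanh r ^ 2) r := by
  have hc := (cosh_pos r).ne'
  have h := (hasDerivAt_sinh r).fun_div (hasDerivAt_cosh r) hc
  simp_rw [← tanh_eq_sinh_div_cosh] at h
  refine h.congr_deriv ?_
  rw [tanh_eq_sinh_div_cosh]
  field_simp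

theorem tanh_strictMono : StrictMono tanh :=
  strictMono_of_deriv_pos fun r => by
    rw [(hasDerivAt_tanh_one_sub_sq_s13 r).deriv]
    linarith [tanh_sq_lt_one r]

open Polynomial in
/-- On `(0, ∞)`, the derivatives of `√tanh` of positive order have the form
`tanh ^ (1/2 - j) * (1 - tanh ^ 2) * P(tanh)` with `P` a polynomial. -/
theorem exists_polynomial_iteratedDeriv_sqrt_tanh (k : ℕ) :
    ∃ P : ℝ[X], ∀ r : ℝ, 0 < r →
      iteratedDeriv (k + 1) (fun x => √(tanh x)) r =
        tanh r ^ ((1 : ℝ) / 2 - (k + 1 : ℕ)) * (1 - tanh r ^ 2) * P.eval (tanh r) := by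
  induction k with
  | zero =>
    refine ⟨C (1 / 2), fun r hr => ?_⟩
    have ht := tanh_pos_of_pos hr
    rw [zero_add, iteratedDeriv_one, ((hasDerivAt_tanh_one_sub_sq_s13 r).sqrt ht.ne').deriv,
      show (1 : ℝ) / 2 - (1 : ℕ) = -(1 / 2) by norm_num, rpow_neg ht.le, ← sqrt_eq_rpow, eval_C]
    field_simp
  | succ k ih =>
    obtain ⟨P, hP⟩ := ih
    set a : ℝ := (1 : ℝ) / 2 - (k + 1 : ℕ) with ha
    refine ⟨C a * (1 - X ^ 2) * P - 2 * X ^ 2 * P + X * (1 - X ^ 2) * derivative P,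
      fun r hr => ?_⟩
    have ht := tanh_pos_of_pos hr
    have hd := hasDerivAt_tanh_one_sub_sq_s13 r
    have heq : iteratedDeriv (k + 1) (fun x => √(tanh x)) =ᶠ[nhds r]
        fun x => tanh x ^ a * (1 - tanh x ^ 2) * P.eval (tanh x) :=
      Filter.eventuallyEq_of_mem (Ioi_mem_nhds hr) hP
    have hd' := ((hd.rpow_const (p := a) (Or.inl ht.ne')).fun_mul
      ((hd.fun_pow 2).const_sub 1)).fun_mul ((P.hasDerivAt (tanh r)).comp r hd)
    rw [iteratedDeriv_succ, heq.deriv_eq]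
    refine hd'.deriv.trans ?_
    have h1 : (1 : ℝ) / 2 - (k + 1 + 1 : ℕ) = a - 1 := by rw [ha]; push_cast; ring
    have h2 : tanh r ^ a = tanh r ^ (a - 1) * tanh r := by
      rw [rpow_sub_one ht.ne']; field_simp
    rw [h1, h2]
    simp
    ring

theorem jap_pos (r : ℝ) : 0 < jap r := sqrt_pos.2 (by positivity)

theorem div_jap_le_tanh {r : ℝ} (hr : 0 < r) : r / jap r ≤ tanh r := by
  rw [jap, ← tanh_arsinh]
  refine tanh_strictMono.monotone ?_
  rw [← sinh_le_sinh, sinh_arsinh]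
  exact self_le_sinh_iff.2 hr.le

theorem tanh_le_two_mul_div_jap {r : ℝ} (hr : 0 < r) : tanh r ≤ 2 * (r / jap r) := by
  rw [← mul_div_assoc, le_div_iff₀ (jap_pos r)]
  rcases le_total r 1 with h | h
  · have hj : jap r ≤ cosh r := by
      refine sqrt_le_iff.2 ⟨(cosh_pos r).le, ?_⟩
      rw [cosh_sq]
      nlinarith [self_le_sinh_iff.2 hr.le]
    have hs : sinh r ≤ 2 * r := by
      have h1 := (abs_le.1 (abs_exp_sub_one_sub_id_le (x := r) (by rwa [abs_of_pos hr]))).2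
      have h2 := add_one_le_exp (-r)
      rw [sinh_eq]
      nlinarith
    calc tanh r * jap r ≤ tanh r * cosh r := by gcongr; exact (tanh_pos_of_pos hr).le
      _ = sinh r := by rw [tanh_eq_sinh_div_cosh]; field_simp [(cosh_pos r).ne']
      _ ≤ 2 * r := hs
  · have hj : jap r ≤ 2 * r := sqrt_le_iff.2 ⟨by positivity, by nlinarith⟩
    nlinarith [tanh_lt_one r, jap_pos r]

theorem one_sub_tanh_sq_le (r : ℝ) : 1 - tanh r ^ 2 ≤ 4 * exp (-2 * r) := by
  have hc := cosh_pos r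
  have h1 : 1 - tanh r ^ 2 = 1 / cosh r ^ 2 := by
    rw [tanh_eq_sinh_div_cosh, div_pow, sinh_sq]
    field_simp
    ring
  have h2 : exp r / 2 ≤ cosh r := by rw [cosh_eq]; linarith [exp_pos (-r)]
  calc 1 - tanh r ^ 2 = 1 / cosh r ^ 2 := h1
    _ ≤ 1 / (exp r / 2) ^ 2 := by gcongr
    _ = 4 * exp (-2 * r) := by
      rw [show -2 * r = -(r + r) by ring, exp_neg, exp_add]
      field_simp
      norm_num

theorem rpow_mul_jap_rpow_neg {r : ℝ} (hr : 0 < r) (a : ℝ) :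
    r ^ a * jap r ^ (-a) = (r / jap r) ^ a := by
  rw [div_rpow hr.le (jap_pos r).le, rpow_neg (jap_pos r).le, div_eq_mul_inv]

/-- For `T₀(r) = √(tanh r)`: `T₀(r) ∼ r^{1/2} ⟨r⟩^{-1/2}` for `r > 0`, and for every
`j ≥ 1`, `|T₀^{(j)}(r)| ≤ C_j r^{1/2-j} ⟨r⟩^{j-1/2} e^{-2r}` for all `r > 0`. -/
theorem sqrt_tanh_bounds :
    (∃ c₁ > (0 : ℝ), ∃ c₂ > (0 : ℝ), ∀ r : ℝ, 0 < r →
      c₁ * (r ^ ((1 : ℝ) / 2) * jap r ^ (-(1 : ℝ) / 2)) ≤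
        Real.sqrt (Real.tanh r) ∧
      Real.sqrt (Real.tanh r) ≤
        c₂ * (r ^ ((1 : ℝ) / 2) * jap r ^ (-(1 : ℝ) / 2))) ∧
    ∀ j : ℕ, 1 ≤ j → ∃ C > (0 : ℝ), ∀ r : ℝ, 0 < r →
      |iteratedDeriv j (fun x => Real.sqrt (Real.tanh x)) r| ≤
        C * (r ^ ((1 : ℝ) / 2 - j) * jap r ^ ((j : ℝ) - 1 / 2) * Real.exp (-2 * r)) := by
  refine ⟨⟨1, one_pos, √2, by positivity, fun r hr => ?_⟩, fun j hj => ?_⟩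
  · rw [show -(1 : ℝ) / 2 = -(1 / 2) by ring, rpow_mul_jap_rpow_neg hr, ← sqrt_eq_rpow, one_mul,
      ← sqrt_mul zero_le_two]
    exact ⟨sqrt_le_sqrt (div_jap_le_tanh hr), sqrt_le_sqrt (tanh_le_two_mul_div_jap hr)⟩
  · obtain ⟨k, rfl⟩ := Nat.exists_eq_add_of_le' hj
    obtain ⟨P, hP⟩ := exists_polynomial_iteratedDeriv_sqrt_tanh k
    obtain ⟨M, hM⟩ := (isCompact_Icc (a := (0 : ℝ)) (b := 1)).exists_bound_of_continuousOn
      P.continuous.continuousOn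
    have hM0 : 0 ≤ M := (norm_nonneg _).trans (hM 0 (by simp))
    refine ⟨4 * (M + 1), by positivity, fun r hr => ?_⟩
    have ht := tanh_pos_of_pos hr
    have hsq : 0 ≤ 1 - tanh r ^ 2 := by linarith [tanh_sq_lt_one r]
    have hexp : (1 : ℝ) / 2 - (k + 1 : ℕ) ≤ 0 := by push_cast; linarith [k.cast_nonneg (α := ℝ)]
    rw [hP r hr, show ((k + 1 : ℕ) : ℝ) - 1 / 2 = -(1 / 2 - (k + 1 : ℕ)) by ring,
      rpow_mul_jap_rpow_neg hr, abs_mul, abs_mul, abs_of_nonneg hsq,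
      abs_of_pos (rpow_pos_of_pos ht _)]
    calc tanh r ^ ((1 : ℝ) / 2 - (k + 1 : ℕ)) * (1 - tanh r ^ 2) * |P.eval (tanh r)|
        ≤ (r / jap r) ^ ((1 : ℝ) / 2 - (k + 1 : ℕ)) * (4 * exp (-2 * r)) * (M + 1) := by
          have hq : 0 < r / jap r := div_pos hr (jap_pos r)
          have hP' := (hM _ ⟨ht.le, (tanh_lt_one r).le⟩).trans (le_add_of_nonneg_right zero_le_one)
          exact mul_le_mul (mul_le_mul (rpow_le_rpow_of_nonpos hq (div_jap_le_tanh hr) hexp)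
            (one_sub_tanh_sq_le r) hsq (by positivity)) hP' (abs_nonneg _) (by positivity)
      _ = _ := by ring
end
end
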